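/- The cumulative hierarchy is equivalent to the covered mewos: there exists a function F from the type of covered mewos with carrier in universe u to ZFSet.{u} such that (a) F is surjective; (b) for all covered mewos X, Y, F X = F Y if and only if X and Y are isomorphic as mewos; and (c) for all covered mewos X, Y, F X ∈ F Y if and only if there exists a bounded simulation X < Y. -/

import Mathlib

universe u

/-- A marked extensional wellfounded order (mewo): a type equipped with a wellfounded,
extensional binary relation together with a marking predicate. -/
structure Mewo : Type (u + 1) where
  carrier : Type u
  lt : carrier → carrier → Prop
  wf : WellFounded lt
  ext : ∀ x y : carrier, (∀ z : carrier, lt z x ↔ lt z y) → x = y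
  marked : carrier → Prop

namespace Mewo

/-- An element is covered if some marked element lies reflexive-transitively above it. -/
def Covered (M : Mewo.{u}) : Prop :=
  ∀ x : M.carrier, ∃ x₀ : M.carrier, M.marked x₀ ∧ Relation.ReflTransGen M.lt x x₀

/-- The initial segment `M ↓⁺ x`: carrier is the elements transitively below `x`, with
the restricted order; the marked elements are the immediate predecessors of `x`. -/
def seg (M : Mewo.{u}) (x : M.carrier) : Mewo.{u} where
  carrier := { y : M.carrier // Relation.TransGen M.lt y x }
  lt a b := M.lt a.1 b.1
  wf := by
    have h := InvImage.wf
      (fun a : { y : M.carrier // Relation.TransGen M.lt y x } => a.1) M.wf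
    exact h
  ext := by
    rintro ⟨a, ha⟩ ⟨b, hb⟩ h
    apply Subtype.ext
    apply M.ext
    intro z
    constructor
    · intro hz
      exact (h ⟨z, Relation.TransGen.head hz ha⟩).mp hz
    · intro hz
      exact (h ⟨z, Relation.TransGen.head hz hb⟩).mpr hz
  marked a := M.lt a.1 x

end Mewo

/-- An isomorphism of mewos: a bijection preserving and reflecting order and marking. -/
structure MewoIso (M : Mewo.{u}) (N : Mewo.{u}) where
  toEquiv : M.carrier ≃ N.carrier
  lt_iff : ∀ x y : M.carrier, M.lt x y ↔ N.lt (toEquiv x) (toEquiv y)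
  marked_iff : ∀ x : M.carrier, M.marked x ↔ N.marked (toEquiv x)

/-- `f` is a simulation from `M` to `N`: it preserves markings, is monotone, and has
the initial-segment property. -/
def IsSimulation (M N : Mewo.{u}) (f : M.carrier → N.carrier) : Prop :=
  (∀ x : M.carrier, M.marked x → N.marked (f x)) ∧
  (∀ x y : M.carrier, M.lt x y → N.lt (f x) (f y)) ∧
  (∀ (x : M.carrier) (y : N.carrier), N.lt y (f x) → ∃ x' : M.carrier, M.lt x' x ∧ f x' = y)

/-- A bounded simulation `M < N`: a marked element `y : N` together with an isomorphism
of mewos between `M` and the initial segment `N ↓⁺ y`. -/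
def BoundedSim (M N : Mewo.{u}) : Prop :=
  ∃ y : N.carrier, N.marked y ∧ Nonempty (MewoIso M (N.seg y))

namespace Mewo

noncomputable def col (M : Mewo.{u}) : M.carrier → ZFSet.{u} :=
  M.wf.fix fun x ih => ZFSet.range (fun y : { y : M.carrier // M.lt y x } => ih y.1 y.2)

theorem mem_col (M : Mewo.{u}) (x : M.carrier) (z : ZFSet.{u}) :
    z ∈ M.col x ↔ ∃ y, M.lt y x ∧ M.col y = z := by
  rw [col, WellFounded.fix_eq, ZFSet.mem_range]
  constructor
  · rintro ⟨⟨y, hy⟩, h⟩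
    exact ⟨y, hy, h⟩
  · rintro ⟨y, hy, h⟩
    exact ⟨⟨y, hy⟩, h⟩

theorem col_inj (M : Mewo.{u}) : ∀ x y : M.carrier, M.col x = M.col y → x = y := by
  intro x
  induction x using M.wf.induction with
  | _ x ih =>
    intro y h
    apply M.ext
    intro z
    constructor
    · intro hz
      have : M.col z ∈ M.col y := h ▸ (M.mem_col x _).2 ⟨z, hz, rfl⟩
      obtain ⟨w, hw, e⟩ := (M.mem_col y _).1 this
      rwa [ih z hz w e.symm]
    · intro hz
      have : M.col z ∈ M.col x := h ▸ (M.mem_col y _).2 ⟨z, hz, rfl⟩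
      obtain ⟨w, hw, e⟩ := (M.mem_col x _).1 this
      rwa [← ih w hw z e]

theorem lt_iff_col (M : Mewo.{u}) (x y : M.carrier) : M.lt x y ↔ M.col x ∈ M.col y := by
  rw [mem_col]
  constructor
  · intro h
    exact ⟨x, h, rfl⟩
  · rintro ⟨z, hz, e⟩
    rwa [← M.col_inj _ _ e]

noncomputable def toZF (M : Mewo.{u}) : ZFSet.{u} :=
  ZFSet.range (fun y : { y : M.carrier // M.marked y } => M.col y.1)

theorem mem_toZF (M : Mewo.{u}) (z : ZFSet.{u}) :
    z ∈ M.toZF ↔ ∃ y, M.marked y ∧ M.col y = z := by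
  rw [toZF, ZFSet.mem_range]
  constructor
  · rintro ⟨⟨y, hy⟩, h⟩
    exact ⟨y, hy, h⟩
  · rintro ⟨y, hy, h⟩
    exact ⟨⟨y, hy⟩, h⟩

theorem marked_iff_col (M : Mewo.{u}) (x : M.carrier) : M.marked x ↔ M.col x ∈ M.toZF := by
  rw [mem_toZF]
  constructor
  · intro h
    exact ⟨x, h, rfl⟩
  · rintro ⟨z, hz, e⟩
    rwa [← M.col_inj _ _ e]

theorem exists_col {M N : Mewo.{u}} (hM : M.Covered) (h : M.toZF = N.toZF) (x : M.carrier) :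
    ∃ y, N.col y = M.col x := by
  obtain ⟨x₀, hm, hx⟩ := hM x
  induction hx using Relation.ReflTransGen.head_induction_on with
  | refl =>
    rw [marked_iff_col, h, mem_toZF] at hm
    obtain ⟨y, -, e⟩ := hm
    exact ⟨y, e⟩
  | head hab _ ih =>
    obtain ⟨y, e⟩ := ih
    rw [lt_iff_col, ← e, mem_col] at hab
    obtain ⟨z, -, e'⟩ := hab
    exact ⟨z, e'⟩

theorem iso_of_eq {M N : Mewo.{u}} (hM : M.Covered) (hN : N.Covered) (h : M.toZF = N.toZF) :
    Nonempty (MewoIso M N) := by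
  choose f hf using exists_col hM h
  choose g hg using exists_col hN h.symm
  refine ⟨⟨⟨f, g, fun x => M.col_inj _ _ (by rw [hg, hf]),
    fun y => N.col_inj _ _ (by rw [hf, hg])⟩, fun x y => ?_, fun x => ?_⟩⟩
  · show _ ↔ N.lt (f x) (f y)
    rw [lt_iff_col, lt_iff_col, hf, hf]
  · show _ ↔ N.marked (f x)
    rw [marked_iff_col, marked_iff_col, hf, h]

theorem col_iso {M N : Mewo.{u}} (e : MewoIso M N) (x : M.carrier) :
    N.col (e.toEquiv x) = M.col x := by
  induction x using M.wf.induction with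
  | _ x ih =>
    ext z
    rw [mem_col, mem_col]
    constructor
    · rintro ⟨y, hy, h⟩
      obtain ⟨y, rfl⟩ := e.toEquiv.surjective y
      rw [← e.lt_iff] at hy
      exact ⟨y, hy, by rw [← ih y hy, h]⟩
    · rintro ⟨y, hy, h⟩
      exact ⟨e.toEquiv y, (e.lt_iff _ _).1 hy, by rw [ih y hy, h]⟩

theorem eq_of_iso {M N : Mewo.{u}} (e : MewoIso M N) : M.toZF = N.toZF := by
  ext z
  rw [mem_toZF, mem_toZF]
  constructor
  · rintro ⟨y, hy, h⟩
    exact ⟨e.toEquiv y, (e.marked_iff _).1 hy, by rw [col_iso, h]⟩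
  · rintro ⟨y, hy, h⟩
    obtain ⟨y, rfl⟩ := e.toEquiv.surjective y
    exact ⟨y, (e.marked_iff _).2 hy, by rw [← col_iso e, h]⟩

theorem seg_covered (M : Mewo.{u}) (x : M.carrier) : (M.seg x).Covered := by
  rintro ⟨y, hy⟩
  induction hy using Relation.TransGen.head_induction_on with
  | single h => exact ⟨⟨_, .single h⟩, h, .refl⟩
  | head h h' ih =>
    obtain ⟨x₀, hm, hx⟩ := ih
    exact ⟨x₀, hm, .head (show (M.seg x).lt ⟨_, _⟩ ⟨_, _⟩ from h) hx⟩

theorem seg_col (M : Mewo.{u}) (x : M.carrier) (a : (M.seg x).carrier) :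
    (M.seg x).col a = M.col a.1 := by
  induction a using (M.seg x).wf.induction with
  | _ a ih =>
    ext z
    rw [mem_col, mem_col]
    constructor
    · rintro ⟨y, hy, h⟩
      exact ⟨y.1, hy, by rw [← ih y hy, h]⟩
    · rintro ⟨y, hy, h⟩
      exact ⟨⟨y, .head hy a.2⟩, hy, by rw [ih ⟨y, .head hy a.2⟩ hy, h]⟩

theorem seg_toZF (M : Mewo.{u}) (x : M.carrier) : (M.seg x).toZF = M.col x := by
  ext z
  rw [mem_toZF, mem_col]
  constructor
  · rintro ⟨y, hy, h⟩
    exact ⟨y.1, hy, by rw [← seg_col, h]⟩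
  · rintro ⟨y, hy, h⟩
    exact ⟨⟨y, .single hy⟩, hy, (seg_col M x ⟨y, .single hy⟩).trans h⟩

abbrev TC (x : ZFSet.{u}) : Set ZFSet.{u} := { z | Relation.TransGen (· ∈ ·) z x }

theorem small_TC (x : ZFSet.{u}) : Small.{u} (TC x) := by
  induction x using ZFSet.inductionOn with
  | _ x ih =>
    have : ∀ y : (x : Set ZFSet.{u}), Small.{u} (TC y.1) := fun y => ih y.1 y.2
    have hs : Small.{u} (x : Set ZFSet.{u}) := ZFSet.small_coe x
    have h : TC x ⊆ (x : Set ZFSet.{u}) ∪ ⋃ y : (x : Set ZFSet.{u}), TC y.1 := by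
      intro z hz
      rcases Relation.TransGen.tail'_iff.1 hz with ⟨y, hzy, hy⟩
      rcases Relation.reflTransGen_iff_eq_or_transGen.1 hzy with rfl | h
      · exact Or.inl hy
      · exact Or.inr (Set.mem_iUnion.2 ⟨⟨y, hy⟩, h⟩)
    exact small_subset h

noncomputable def ofZF (x : ZFSet.{u}) : Mewo.{u} :=
  haveI := small_TC x
  { carrier := Shrink.{u} (TC x)
    lt := fun a b => ((equivShrink (TC x)).symm a).1 ∈ ((equivShrink (TC x)).symm b).1
    wf := InvImage.wf (fun a => ((equivShrink (TC x)).symm a).1) ZFSet.mem_wf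
    ext := by
      intro a b h
      apply (equivShrink (TC x)).symm.injective
      apply Subtype.ext
      ext z
      constructor
      · intro hz
        have := (h (equivShrink (TC x) ⟨z, .head hz ((equivShrink (TC x)).symm a).2⟩)).1
        simp only [Equiv.symm_apply_apply] at this
        exact this hz
      · intro hz
        have := (h (equivShrink (TC x) ⟨z, .head hz ((equivShrink (TC x)).symm b).2⟩)).2
        simp only [Equiv.symm_apply_apply] at this
        exact this hz
    marked := fun a => ((equivShrink (TC x)).symm a).1 ∈ x }

theorem ofZF_spec (x : ZFSet.{u}) : ∃ e : (ofZF x).carrier ≃ TC x,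
    (∀ a b, (ofZF x).lt a b ↔ (e a).1 ∈ (e b).1) ∧ ∀ a, (ofZF x).marked a ↔ (e a).1 ∈ x :=
  haveI := small_TC x
  ⟨(equivShrink (TC x)).symm, fun _ _ => Iff.rfl, fun _ => Iff.rfl⟩

theorem ofZF_covered (x : ZFSet.{u}) : (ofZF x).Covered := by
  obtain ⟨e, hl, hm⟩ := ofZF_spec x
  suffices H : ∀ y (hy : y ∈ TC x), ∃ x₀, (ofZF x).marked x₀ ∧
      Relation.ReflTransGen (ofZF x).lt (e.symm ⟨y, hy⟩) x₀ by
    intro a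
    simpa using H (e a).1 (e a).2
  intro y hy
  induction hy using Relation.TransGen.head_induction_on with
  | single h => exact ⟨_, (hm (e.symm ⟨_, .single h⟩)).2 (by simpa using h), .refl⟩
  | head h h' ih =>
    obtain ⟨x₀, hx, hr⟩ := ih
    exact ⟨x₀, hx, .head ((hl _ _).2 (by simpa using h)) hr⟩

theorem ofZF_toZF (x : ZFSet.{u}) : (ofZF x).toZF = x := by
  obtain ⟨e, hl, hm⟩ := ofZF_spec x
  have hc : ∀ a, (ofZF x).col a = (e a).1 := by
    intro a
    induction a using (ofZF x).wf.induction with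
    | _ a ih =>
      ext z
      rw [mem_col]
      constructor
      · rintro ⟨y, hy, rfl⟩
        rw [ih y hy]
        exact (hl _ _).1 hy
      · intro hz
        have hy : (ofZF x).lt (e.symm ⟨z, .head hz (e a).2⟩) a := (hl _ _).2 (by simpa using hz)
        exact ⟨_, hy, by rw [ih _ hy]; simp⟩
  ext z
  rw [mem_toZF]
  constructor
  · rintro ⟨y, hy, rfl⟩
    rw [hc]
    exact (hm _).1 hy
  · intro hz
    exact ⟨e.symm ⟨z, .single hz⟩, (hm _).2 (by simpa using hz), by rw [hc]; simp⟩

end Mewo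

/-- the cumulative hierarchy `ZFSet.{u}` is equivalent to the covered
mewos: there is a surjection from covered mewos to `ZFSet.{u}` that identifies exactly
the isomorphic covered mewos and turns bounded simulation into membership. -/
theorem zfSet_equiv_covered_mewos :
    ∃ F : { M : Mewo.{u} // M.Covered } → ZFSet.{u},
      Function.Surjective F ∧
      (∀ X Y : { M : Mewo.{u} // M.Covered }, F X = F Y ↔ Nonempty (MewoIso X.1 Y.1)) ∧
      (∀ X Y : { M : Mewo.{u} // M.Covered }, F X ∈ F Y ↔ BoundedSim X.1 Y.1) := by
  refine ⟨fun M => M.1.toZF, fun x => ⟨⟨Mewo.ofZF x, Mewo.ofZF_covered x⟩, Mewo.ofZF_toZF x⟩,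
    fun X Y => ⟨Mewo.iso_of_eq X.2 Y.2, fun ⟨e⟩ => Mewo.eq_of_iso e⟩, fun X Y => ?_⟩
  rw [Mewo.mem_toZF]
  constructor
  · rintro ⟨y, hy, h⟩
    exact ⟨y, hy, Mewo.iso_of_eq X.2 (Mewo.seg_covered _ y) (by rw [Mewo.seg_toZF, h])⟩
  · rintro ⟨y, hy, ⟨e⟩⟩
    exact ⟨y, hy, (Mewo.seg_toZF _ y).symm.trans (Mewo.eq_of_iso e).symm⟩
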